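/- Every strongly √J-clean ring is a strongly clean ring; that is, if R is strongly √J-clean, then every element of R can be written as e + u with e idempotent, u a unit, and eu = ue. -/

import Mathlib

/-- `√J(R)`: the set of elements some positive power of which lies in the
Jacobson radical `J(R)` of the ring `R`. -/
def sqrtJ (R : Type*) [Ring R] : Set R :=
  {z : R | ∃ n : ℕ, 1 ≤ n ∧ z ^ n ∈ (⊥ : TwoSidedIdeal R).jacobson}

/-- `R` is a `√J`-clean ring: every element is the sum of an idempotent and an
element of `√J(R)`. -/
def IsSqrtJCleanRing (R : Type*) [Ring R] : Prop :=
  ∀ a : R, ∃ e z : R, IsIdempotentElem e ∧ z ∈ sqrtJ R ∧ a = e + z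

/-- `R` is a strongly `√J`-clean ring: every element is the sum of an idempotent
and an element of `√J(R)` that commute with each other. -/
def IsStronglySqrtJCleanRing (R : Type*) [Ring R] : Prop :=
  ∀ a : R, ∃ e z : R, IsIdempotentElem e ∧ z ∈ sqrtJ R ∧ a = e + z ∧ e * z = z * e

/-- `R` is a uniquely `√J`-clean ring: every element is uniquely the sum of an
idempotent and an element of `√J(R)`. -/
def IsUniquelySqrtJCleanRing (R : Type*) [Ring R] : Prop :=
  ∀ a : R, ∃! p : R × R, IsIdempotentElem p.1 ∧ p.2 ∈ sqrtJ R ∧ a = p.1 + p.2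

/-- `R` is a uniquely clean ring: every element is uniquely the sum of an
idempotent and a unit. -/
def IsUniquelyCleanRing (R : Type*) [Ring R] : Prop :=
  ∀ a : R, ∃! p : R × R, IsIdempotentElem p.1 ∧ IsUnit p.2 ∧ a = p.1 + p.2

theorem aux_left_inv {R : Type*} [Ring R] {x : R}
    (hx : x ∈ (⊥ : TwoSidedIdeal R).jacobson) : ∃ z, z * (1 + x) = 1 := by
  obtain ⟨z, hz⟩ := TwoSidedIdeal.mem_jacobson_iff.1 hx 1
  refine ⟨z, ?_⟩
  have h0 : z * 1 * x + z - 1 = 0 := by simpa [TwoSidedIdeal.mem_bot] using hz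
  rw [mul_one, sub_eq_zero] at h0
  rw [mul_add, mul_one, add_comm, h0]

theorem aux_isUnit {R : Type*} [Ring R] {x : R}
    (hx : x ∈ (⊥ : TwoSidedIdeal R).jacobson) : IsUnit (1 + x) := by
  obtain ⟨z, hz⟩ := aux_left_inv hx
  have hm : -(z * x) ∈ (⊥ : TwoSidedIdeal R).jacobson :=
    TwoSidedIdeal.neg_mem _ (TwoSidedIdeal.mul_mem_left _ _ _ hx)
  obtain ⟨t, ht⟩ := aux_left_inv hm
  have h1 : 1 + -(z * x) = z := by
    rw [← hz]; noncomm_ring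
  rw [h1] at ht
  have h2 : t = 1 + x := left_inv_eq_right_inv ht hz
  exact ⟨⟨1 + x, z, by rw [← h2, ht], hz⟩, rfl⟩

theorem stronglyClean_of_stronglySqrtJClean (R : Type*) [Ring R]
    (h : IsStronglySqrtJCleanRing R) :
    ∀ a : R, ∃ e u : R, IsIdempotentElem e ∧ IsUnit u ∧ a = e + u ∧ e * u = u * e := by
  intro a
  obtain ⟨e, z, he, ⟨n, hn, hz⟩, ha, hc⟩ := h a
  have hee : e * e = e := he
  have hs : (2 * e - 1) * (2 * e - 1) = 1 := by
    have : (2 * e - 1) * (2 * e - 1) = 4 * (e * e) - 4 * e + 1 := by noncomm_ring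
    rw [this, hee]; simp
  have hce : Commute e z := hc
  have hcs : Commute (2 * e - 1) z :=
    ((Commute.ofNat_left 2 z).mul_left hce).sub_left (Commute.one_left z)
  have hw : (-((2 * e - 1) * z)) ^ n ∈ (⊥ : TwoSidedIdeal R).jacobson := by
    rw [← neg_mul, hcs.neg_left.mul_pow]
    exact TwoSidedIdeal.mul_mem_left _ _ _ hz
  generalize hW : -((2 * e - 1) * z) = w at hw
  have hu := aux_isUnit (TwoSidedIdeal.neg_mem _ hw)
  rw [← sub_eq_add_neg, ← mul_neg_geom_sum w n] at hu
  have hcg : Commute (1 - w) (∑ i ∈ Finset.range n, w ^ i) :=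
    Commute.sum_right _ _ _ fun i _ =>
      (Commute.one_left _).sub_left ((Commute.refl w).pow_right i)
  have hu1 : IsUnit (1 - w) := (hcg.isUnit_mul_iff.1 hu).1
  have hsu : IsUnit (2 * e - 1) := ⟨⟨_, _, hs, hs⟩, rfl⟩
  have hfac : 2 * e - 1 + z = (2 * e - 1) * (1 - w) := by
    rw [← hW, sub_neg_eq_add, mul_add, ← mul_assoc, hs, mul_one, one_mul]
  refine ⟨1 - e, 2 * e - 1 + z, he.one_sub, ?_, ?_, ?_⟩
  · rw [hfac]; exact hsu.mul hu1
  · rw [ha]; noncomm_ring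
  · have h3 : Commute e (2 * e - 1 + z) :=
      (((Commute.ofNat_right e 2).mul_right (Commute.refl e)).sub_right
        (Commute.one_right e)).add_right hce
    exact (Commute.one_left _).sub_left h3
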